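/- arXiv:1504.00174 — 2 statements merged into one kernel-verified Lean document; each statement's English description precedes it below -/
import Mathlib

section
/- Let R be a commutative ring with unit containing the field of rational numbers, V an R-module, and ∇' : V ⊗_R V → Sym_R(V) an R-bilinear map into the symmetric algebra of V. Let ∇ : Sym_R(V) ⊗_R Sym_R(V) → Sym_R(V) be the unique extension of ∇' satisfying the Leibniz rule in each argument. If ∇' is skew-symmetric, i.e. ∇'(x⊗y) = −∇'(y⊗x) for all x,y ∈ V, then ∇ is skew-symmetric on all of Sym_R(V). -/
/-!
Skew-symmetry is checked on generators. For fixed `a`, both `b ↦ D a b` and `b ↦ -D b a` are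
`R`-linear derivations of `Sym_R(V)`, so the set of `b` on which they agree contains the scalars
(derivations kill them) and is closed under sums and products. As `V` generates `Sym_R(V)` as an
algebra (`symmAlg_induction`), the identity for all `b` follows from the identity for `b ∈ V`.
Applying this once in each variable reduces the claim to skew-symmetry of `∇'` on `V`.
-/

noncomputable section

open MvPolynomial in
/-- The ideal of linearity relations presenting the symmetric algebra of the module `V`
as a quotient of the polynomial algebra on the set `V`. -/
def symIdeal (R V : Type) [CommRing R] [AddCommGroup V] [Module R V] :
    Ideal (MvPolynomial V R) :=
  Ideal.span
    ({p | ∃ v w : V, p = X (v + w) - X v - X w} ∪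
     {p | ∃ (r : R) (v : V), p = X (r • v) - C r * X v})

/-- The symmetric algebra `Sym_R(V)` of an `R`-module `V`. -/
abbrev SymmAlg (R V : Type) [CommRing R] [AddCommGroup V] [Module R V] : Type :=
  MvPolynomial V R ⧸ symIdeal R V

open MvPolynomial in
/-- The canonical linear inclusion `V → Sym_R(V)`. -/
def symι (R V : Type) [CommRing R] [AddCommGroup V] [Module R V] :
    V →ₗ[R] SymmAlg R V where
  toFun v := Ideal.Quotient.mk (symIdeal R V) (X v)
  map_add' v w := by
    rw [← map_add, Ideal.Quotient.eq]
    exact Ideal.subset_span (Or.inl ⟨v, w, by ring⟩)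
  map_smul' r v := by
    simp only [RingHom.id_apply]
    rw [show r • (Ideal.Quotient.mk (symIdeal R V)) (X v)
          = Ideal.Quotient.mk (symIdeal R V) (r • X v) from
        (map_smul (Ideal.Quotient.mkₐ R (symIdeal R V)) r (X v)).symm]
    rw [show r • (X v : MvPolynomial V R) = C r * X v from by rw [smul_eq_C_mul]]
    rw [Ideal.Quotient.eq]
    exact Ideal.subset_span (Or.inr ⟨r, v, by ring⟩)

/-- `Sym_R(V)` is generated by `V` as an `R`-algebra, in the form of an induction principle. -/
theorem symmAlg_induction {R V : Type} [CommRing R] [AddCommGroup V] [Module R V]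
    {P : SymmAlg R V → Prop}
    (scalar : ∀ r : R, P (r • 1)) (gen : ∀ v : V, P (symι R V v))
    (add : ∀ a b, P a → P b → P (a + b)) (mul : ∀ a b, P a → P b → P (a * b))
    (a : SymmAlg R V) : P a := by
  obtain ⟨p, rfl⟩ := Ideal.Quotient.mk_surjective a
  induction p using MvPolynomial.induction_on with
  | C r =>
    have h := scalar r
    rw [← Algebra.algebraMap_eq_smul_one] at h
    exact h
  | add p q hp hq => rw [map_add]; exact add _ _ hp hq
  | mul_X p v hp => rw [map_mul]; exact mul _ _ hp (gen v)

/-- Two linear maps that satisfy the Leibniz rule and agree on `V` agree on `Sym_R(V)`. -/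
theorem symmAlg_derivation_ext {R V : Type} [CommRing R] [AddCommGroup V] [Module R V]
    (d e : SymmAlg R V →ₗ[R] SymmAlg R V)
    (hd : ∀ b c, d (b * c) = d b * c + b * d c)
    (he : ∀ b c, e (b * c) = e b * c + b * e c)
    (h : ∀ v : V, d (symι R V v) = e (symι R V v)) (b : SymmAlg R V) : d b = e b := by
  have hd1 : d 1 = 0 := by simpa using hd 1 1
  have he1 : e 1 = 0 := by simpa using he 1 1
  induction b using symmAlg_induction with
  | scalar r => rw [map_smul, map_smul, hd1, he1]
  | gen v => exact h v
  | add a b ha hb => rw [map_add, map_add, ha, hb]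
  | mul a b ha hb => rw [hd, he, ha, hb]

/-- **Lemma 3.1(1).** If a bilinear bracket on the symmetric algebra `Sym_R(V)` of an
`R`-module `V` (where `R` is a commutative ring containing `ℚ`) extends a bilinear map
`∇' : V ⊗ V → Sym_R(V)` and satisfies the Leibniz rule in each argument, then
skew-symmetry of `∇'` on `V` implies skew-symmetry of the extension on all of `Sym_R(V)`. -/
theorem statement0 {R : Type} [CommRing R] [Algebra ℚ R]
    {V : Type} [AddCommGroup V] [Module R V]
    (nabla' : V →ₗ[R] V →ₗ[R] SymmAlg R V)
    (D : SymmAlg R V →ₗ[R] SymmAlg R V →ₗ[R] SymmAlg R V)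
    (hext : ∀ x y : V, D (symι R V x) (symι R V y) = nabla' x y)
    (hleib_right : ∀ a b c : SymmAlg R V, D a (b * c) = D a b * c + b * D a c)
    (hleib_left : ∀ a b c : SymmAlg R V, D (a * b) c = D a c * b + a * D b c)
    (hskew' : ∀ x y : V, nabla' x y = - nabla' y x) :
    ∀ a b : SymmAlg R V, D a b = - D b a := by
  have key : ∀ a : SymmAlg R V, (∀ v : V, D a (symι R V v) = -D (symι R V v) a) →
      ∀ b, D a b = -D b a := by
    intro a h b
    refine symmAlg_derivation_ext (D a) (-D.flip a) (hleib_right a) ?_ ?_ b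
    · intro b c
      simp only [LinearMap.neg_apply, LinearMap.flip_apply, hleib_left]
      ring
    · intro v
      simpa using h v
  intro a
  refine key a fun v => ?_
  -- Reading `key` for the generator `v` backwards gives the remaining identity.
  have hv := key (symι R V v) (fun w => by rw [hext, hext, hskew']) a
  rw [hv, neg_neg]

end
end

section
/- Let R be a commutative ring with unit containing the field of rational numbers, V an R-module, S = Sym_R(V) with its standard bialgebra structure (Δ(x) = x⊗1 + 1⊗x for x ∈ V), δ' : V → S ⊗_R S an R-linear map, and δ : S → S ⊗_R S its extension determined by the (m,δ)-compatibility δ(ab) = δ(a)·Δ(b) + Δ(a)·δ(b) and δ(1) = 0. If δ' satisfies the co-Leibniz rule (id⊗Δ)∘δ' = (δ'⊗id + σ_{1,2}∘(id⊗δ'))∘Δ on V, then δ satisfies the co-Leibniz rule (id⊗Δ)∘δ = (δ⊗id + σ_{1,2}∘(id⊗δ))∘Δ on all of S. -/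
/-!
Both sides of the co-Leibniz rule are derivations `S → S ⊗ S ⊗ S` over one and the same algebra
homomorphism, the iterated coproduct `(id ⊗ Δ) ∘ Δ`, so they agree as soon as they agree on the
generators `V`.

For the left side this is the compatibility of `δ` with products, together with the
multiplicativity of `id ⊗ Δ`. On the right side, `δ ⊗ id` is a derivation over `Δ ⊗ id` and
`σ₁₂ ∘ (id ⊗ δ)` is one over `σ₁₂ ∘ (id ⊗ Δ)` (`lmapTensorId_mul`, `idTensorLmap_mul`).
Precomposing with `Δ` gives derivations over `(Δ ⊗ id) ∘ Δ` and `σ₁₂ ∘ (id ⊗ Δ) ∘ Δ`; these are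
equal to `(id ⊗ Δ) ∘ Δ` by coassociativity and cocommutativity, which are algebra homomorphism
identities and hence can be checked on `V` (`symm_coassoc`, `symm_cocomm`).
-/

noncomputable section

open scoped TensorProduct

section TensorOps
variable (R S : Type) [CommRing R] [AddCommGroup S] [Module R S]

/-- The operator exchanging the first two factors of a threefold tensor product. -/
def sigma12 : S ⊗[R] (S ⊗[R] S) →ₗ[R] S ⊗[R] (S ⊗[R] S) :=
  (TensorProduct.assoc R S S S).toLinearMap ∘ₗ
    (LinearMap.rTensor S (TensorProduct.comm R S S).toLinearMap) ∘ₗ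
      (TensorProduct.assoc R S S S).symm.toLinearMap

/-- The operator exchanging the last two factors of a threefold tensor product. -/
def sigma23 : S ⊗[R] (S ⊗[R] S) →ₗ[R] S ⊗[R] (S ⊗[R] S) :=
  LinearMap.lTensor S (TensorProduct.comm R S S).toLinearMap

/-- The cyclic permutation `τ = σ₂₃ ∘ σ₁₂` of a threefold tensor product. -/
def tau3 : S ⊗[R] (S ⊗[R] S) →ₗ[R] S ⊗[R] (S ⊗[R] S) :=
  sigma23 R S ∘ₗ sigma12 R S

variable {R S}

/-- `f ⊗ id : S ⊗ S → (S ⊗ S) ⊗ S ≃ S ⊗ (S ⊗ S)` for `f : S → S ⊗ S`. -/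
def lmapTensorId (f : S →ₗ[R] S ⊗[R] S) : S ⊗[R] S →ₗ[R] S ⊗[R] (S ⊗[R] S) :=
  (TensorProduct.assoc R S S S).toLinearMap ∘ₗ LinearMap.rTensor S f

/-- `id ⊗ f : S ⊗ S → S ⊗ (S ⊗ S)` for `f : S → S ⊗ S`. -/
def idTensorLmap (f : S →ₗ[R] S ⊗[R] S) : S ⊗[R] S →ₗ[R] S ⊗[R] (S ⊗[R] S) :=
  LinearMap.lTensor S f

end TensorOps

section Multiplicativity
variable {R S : Type} [CommRing R] [CommRing S] [Algebra R S]

theorem sigma12_mul (u v : S ⊗[R] (S ⊗[R] S)) :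
    sigma12 R S (u * v) = sigma12 R S u * sigma12 R S v := by
  let e : S ⊗[R] (S ⊗[R] S) →ₐ[R] S ⊗[R] (S ⊗[R] S) :=
    ((Algebra.TensorProduct.assoc R R R S S S).toAlgHom.comp
      (Algebra.TensorProduct.map (Algebra.TensorProduct.comm R S S).toAlgHom
        (AlgHom.id R S))).comp
      (Algebra.TensorProduct.assoc R R R S S S).symm.toAlgHom
  have h : sigma12 R S = e.toLinearMap := by
    ext a b c
    simp [sigma12, e]
  rw [h]
  exact map_mul e u v

/-- If `f` is a derivation over `g`, then `f ⊗ id` is a derivation over `g ⊗ id`. -/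
theorem lmapTensorId_mul (f g : S →ₗ[R] S ⊗[R] S)
    (h : ∀ a b, f (a * b) = f a * g b + g a * f b) (u v : S ⊗[R] S) :
    lmapTensorId f (u * v)
      = lmapTensorId f u * lmapTensorId g v + lmapTensorId g u * lmapTensorId f v := by
  have key (x y : S ⊗[R] S) (c d : S) :
      TensorProduct.assoc R S S S ((x * y) ⊗ₜ (c * d))
        = TensorProduct.assoc R S S S (x ⊗ₜ c) * TensorProduct.assoc R S S S (y ⊗ₜ d) := by
    rw [← Algebra.TensorProduct.tmul_mul_tmul]
    exact map_mul (Algebra.TensorProduct.assoc R R R S S S) _ _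
  induction u with
  | zero => simp
  | add u₁ u₂ h₁ h₂ => simp only [add_mul, map_add, h₁, h₂]; abel
  | tmul a c =>
    induction v with
    | zero => simp
    | add v₁ v₂ h₁ h₂ => simp only [mul_add, map_add, h₁, h₂]; abel
    | tmul b d =>
      simp only [lmapTensorId, LinearMap.comp_apply, LinearEquiv.coe_coe,
        Algebra.TensorProduct.tmul_mul_tmul, LinearMap.rTensor_tmul, h,
        TensorProduct.add_tmul, map_add, key]

/-- If `f` is a derivation over `g`, then `id ⊗ f` is a derivation over `id ⊗ g`. -/
theorem idTensorLmap_mul (f g : S →ₗ[R] S ⊗[R] S)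
    (h : ∀ a b, f (a * b) = f a * g b + g a * f b) (u v : S ⊗[R] S) :
    idTensorLmap f (u * v)
      = idTensorLmap f u * idTensorLmap g v + idTensorLmap g u * idTensorLmap f v := by
  induction u with
  | zero => simp
  | add u₁ u₂ h₁ h₂ => simp only [add_mul, map_add, h₁, h₂]; abel
  | tmul a c =>
    induction v with
    | zero => simp
    | add v₁ v₂ h₁ h₂ => simp only [mul_add, map_add, h₁, h₂]; abel
    | tmul b d =>
      simp only [idTensorLmap, Algebra.TensorProduct.tmul_mul_tmul, LinearMap.lTensor_tmul, h,
        TensorProduct.tmul_add]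

theorem lmapTensorId_algHom_mul (g : S →ₐ[R] S ⊗[R] S) (u v : S ⊗[R] S) :
    lmapTensorId g.toLinearMap (u * v)
      = lmapTensorId g.toLinearMap u * lmapTensorId g.toLinearMap v := by
  have h : lmapTensorId g.toLinearMap
      = ((Algebra.TensorProduct.assoc R R R S S S).toAlgHom.comp
          (Algebra.TensorProduct.map g (AlgHom.id R S))).toLinearMap := by
    ext a b
    rfl
  rw [h]
  exact map_mul ((Algebra.TensorProduct.assoc R R R S S S).toAlgHom.comp
    (Algebra.TensorProduct.map g (AlgHom.id R S))) u v

theorem idTensorLmap_algHom_mul (g : S →ₐ[R] S ⊗[R] S) (u v : S ⊗[R] S) :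
    idTensorLmap g.toLinearMap (u * v)
      = idTensorLmap g.toLinearMap u * idTensorLmap g.toLinearMap v := by
  have h : idTensorLmap g.toLinearMap
      = (Algebra.TensorProduct.map (AlgHom.id R S) g).toLinearMap := by
    ext a b
    rfl
  rw [h]
  exact map_mul (Algebra.TensorProduct.map (AlgHom.id R S) g) u v

/-- The sum of two derivations over the same map is a derivation, in the form needed for
threefold tensor powers. -/
theorem leibniz_rearrange (p q c d r s : S ⊗[R] (S ⊗[R] S)) :
    (p + q) * c + d * (r + s) = p * c + d * r + (q * c + d * s) := by
  ring

end Multiplicativity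

section Generators
variable {R V : Type} [CommRing R] [AddCommGroup V] [Module R V]

/-- Induction principle for `Sym_R(V)`: it is spanned by iterated products of elements of `V`. -/
theorem symm_induction {P : SymmAlg R V → Prop} (hone : P 1)
    (hsmul : ∀ (r : R) a, P a → P (r • a)) (hadd : ∀ a b, P a → P b → P (a + b))
    (hmul : ∀ a x, P a → P (a * symι R V x)) (a : SymmAlg R V) : P a := by
  obtain ⟨p, rfl⟩ := Ideal.Quotient.mk_surjective a
  induction p using MvPolynomial.induction_on with
  | C r =>
    have h := hsmul r 1 hone
    rwa [← Algebra.algebraMap_eq_smul_one] at h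
  | add p q hp hq => rw [map_add]; exact hadd _ _ hp hq
  | mul_X p x hp => rw [map_mul]; exact hmul _ x hp

variable (Delta : SymmAlg R V →ₐ[R] SymmAlg R V ⊗[R] SymmAlg R V)

/-- Coassociativity: `(Δ ⊗ id) ∘ Δ = (id ⊗ Δ) ∘ Δ`. -/
theorem symm_coassoc
    (hDelta : ∀ x : V, Delta (symι R V x) = symι R V x ⊗ₜ[R] 1 + 1 ⊗ₜ[R] symι R V x)
    (a : SymmAlg R V) :
    lmapTensorId Delta.toLinearMap (Delta a) = idTensorLmap Delta.toLinearMap (Delta a) := by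
  induction a using symm_induction with
  | hone =>
    have h1 : Delta 1 = 1 ⊗ₜ 1 := Delta.map_one'
    simp [lmapTensorId, idTensorLmap, h1]
  | hsmul r a h => simp only [map_smul, h]
  | hadd a b ha hb => simp only [map_add, ha, hb]
  | hmul a x h =>
    rw [map_mul, lmapTensorId_algHom_mul, idTensorLmap_algHom_mul, h]
    congr 1
    simp [hDelta, lmapTensorId, idTensorLmap, Algebra.TensorProduct.one_def,
      TensorProduct.add_tmul, TensorProduct.tmul_add, add_assoc]

/-- Symmetry of the iterated coproduct in its first two factors. -/
theorem symm_cocomm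
    (hDelta : ∀ x : V, Delta (symι R V x) = symι R V x ⊗ₜ[R] 1 + 1 ⊗ₜ[R] symι R V x)
    (a : SymmAlg R V) :
    sigma12 R (SymmAlg R V) (idTensorLmap Delta.toLinearMap (Delta a))
      = idTensorLmap Delta.toLinearMap (Delta a) := by
  induction a using symm_induction with
  | hone =>
    have h1 : Delta 1 = 1 ⊗ₜ 1 := Delta.map_one'
    simp [sigma12, idTensorLmap, h1]
  | hsmul r a h => simp only [map_smul, h]
  | hadd a b ha hb => simp only [map_add, ha, hb]
  | hmul a x h =>
    rw [map_mul, idTensorLmap_algHom_mul, sigma12_mul, h]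
    congr 1
    simp only [hDelta, sigma12, idTensorLmap, Algebra.TensorProduct.one_def, map_add,
      TensorProduct.tmul_add, LinearMap.lTensor_tmul, LinearMap.rTensor_tmul,
      LinearMap.comp_apply, LinearEquiv.coe_coe, AlgHom.toLinearMap_apply, map_one,
      TensorProduct.assoc_symm_tmul, TensorProduct.assoc_tmul, TensorProduct.comm_tmul]
    abel

end Generators

/-- **Lemma 4.1(2).** Let `S = Sym_R(V)` with its standard bialgebra structure, and let
`δ : S → S ⊗ S` be the extension of a linear map `δ' : V → S ⊗ S` determined by the
`(m,δ)`-compatibility and `δ(1) = 0`.  If `δ'` satisfies the co-Leibniz rule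
`(id⊗Δ)∘δ' = (δ'⊗id + σ₁₂∘(id⊗δ'))∘Δ` on `V`, then `δ` satisfies the co-Leibniz rule
on all of `S`. -/
theorem statement6 {R : Type} [CommRing R] [Algebra ℚ R]
    {V : Type} [AddCommGroup V] [Module R V]
    (delta' : V →ₗ[R] SymmAlg R V ⊗[R] SymmAlg R V)
    (Delta : SymmAlg R V →ₐ[R] SymmAlg R V ⊗[R] SymmAlg R V)
    (hDelta : ∀ x : V, Delta (symι R V x) = symι R V x ⊗ₜ[R] 1 + 1 ⊗ₜ[R] symι R V x)
    (delta : SymmAlg R V →ₗ[R] SymmAlg R V ⊗[R] SymmAlg R V)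
    (hext : ∀ x : V, delta (symι R V x) = delta' x)
    (hone : delta 1 = 0)
    (hcompat : ∀ a b : SymmAlg R V, delta (a * b) = delta a * Delta b + Delta a * delta b)
    (hcoleib' : ∀ x : V,
      idTensorLmap Delta.toLinearMap (delta (symι R V x))
        = lmapTensorId delta (Delta (symι R V x))
          + sigma12 R (SymmAlg R V) (idTensorLmap delta (Delta (symι R V x)))) :
    ∀ a : SymmAlg R V,
      idTensorLmap Delta.toLinearMap (delta a)
        = lmapTensorId delta (Delta a)
          + sigma12 R (SymmAlg R V) (idTensorLmap delta (Delta a)) := by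
  intro a
  induction a using symm_induction with
  | hone =>
    have h1 : Delta 1 = 1 ⊗ₜ 1 := Delta.map_one'
    simp [hone, lmapTensorId, idTensorLmap, h1]
  | hsmul r a h => simp only [map_smul, h, smul_add]
  | hadd a b ha hb => simp only [map_add, ha, hb]; abel
  | hmul a x h =>
    have hx := hcoleib' x
    rw [hcompat, map_add, idTensorLmap_algHom_mul, idTensorLmap_algHom_mul, map_mul,
      lmapTensorId_mul delta Delta.toLinearMap hcompat,
      idTensorLmap_mul delta Delta.toLinearMap hcompat, map_add, sigma12_mul, sigma12_mul,
      symm_coassoc Delta hDelta, symm_coassoc Delta hDelta,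
      symm_cocomm Delta hDelta, symm_cocomm Delta hDelta, h, hx]
    exact leibniz_rearrange _ _ _ _ _ _

end
end
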